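/- Let T = (T_1, …, T_n) be a Beurling tuple on a complex Hilbert space H and let i, j ∈ {1, …, n} with i ≠ j. Then the closure of the range of the joint commutator δ_{ij}(T) is contained in the truncated defect space 𝒟_{i,T}, the closure of the range of D²_{i,T}. -/

import Mathlib

/-!
The theorem follows from the Beurling-type structure of the dilation of `T`.

A Szegő tuple dilates to the multishift on `ℓ²(ℕⁿ, H)` (`exists_dilation`): there are doubly
commuting isometries `M_k` and an isometry `J` with `M_k† J = J T_k†`. The isometry property of
`J h = (𝕊ₙ⁻¹(T, T*)^{1/2} T^{*α} h)_α` is the Szegő identity `hasSum_szego`, where purity of the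
`T_k` removes the remainder terms.

Let `R = 1 - J J†` be the projection onto the orthogonal complement of `ran J`, which is invariant
under every `M_k`, and put `V_k = M_k R`, `X_k = R M_k J`. Then `I - T_i* T_i = X_i† X_i`,
`[T_j, T_i*] = X_i† X_j` for `i ≠ j`, and `T_k X_i† = X_i† V_k` for `k ≠ i`. The Beurling condition
gives `X_j X_i† = 0`, and this makes the isometries `V_k` of `ran R` doubly commuting
(`range_subset_of_dilation`). Hence `G = ∏_{k ≠ i} (I - Δ_{V_k})(R)` is an orthogonal projection
(`applyDelta_isProj`). Since `X_j` takes values orthogonal to `ran V_j`, intertwining gives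
`D²_{i,T} = X_i† G X_i = Y Y†` and `δ_{ij}(T) = X_i† G X_j = Y X_j` with `Y = X_i† G`
(`range_subset_of_model`). Finally `ran Y ⊆ closure (ran Y Y†)` (`range_comp_subset_closure`).
-/

open ContinuousLinearMap Filter Topology

variable {H : Type*} [NormedAddCommGroup H] [InnerProductSpace ℂ H] [CompleteSpace H]

/-- `T^k = T 0 ^ k 0 * T 1 ^ k 1 * ⋯` in increasing index order. -/
noncomputable def finPow {n : ℕ} (T : Fin n → H →L[ℂ] H) (k : Fin n → ℕ) : H →L[ℂ] H :=
  ((List.finRange n).map fun i => T i ^ k i).prod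

/-- `𝕊ₙ⁻¹(T, T*) = ∑_{k ∈ {0,1}ⁿ} (−1)^{|k|} T^k T^{*k}`. -/
noncomputable def szegoInv {n : ℕ} (T : Fin n → H →L[ℂ] H) : H →L[ℂ] H :=
  ∑ k : Fin n → Bool,
    ((-1 : ℂ) ^ (∑ i, if k i then 1 else 0)) •
      (finPow T (fun i => if k i then 1 else 0) *
        adjoint (finPow T (fun i => if k i then 1 else 0)))

/-- A Szegő tuple: commuting contractions, `𝕊ₙ⁻¹(T,T*) ≥ 0`, each `Tᵢ` of class `C_{·0}`. -/
structure IsSzegoTuple {n : ℕ} (T : Fin n → H →L[ℂ] H) : Prop where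
  comm : ∀ i j, T i * T j = T j * T i
  contraction : ∀ i, ‖T i‖ ≤ 1
  pos : (szegoInv T).IsPositive
  pure : ∀ i (h : H), Tendsto (fun m : ℕ => (adjoint (T i) ^ m) h) atTop (𝓝 0)

/-- A Beurling tuple: a Szegő tuple with `(I − Tᵢ*Tᵢ)(I − Tⱼ*Tⱼ) = 0` for `i ≠ j`. -/
def IsBeurlingTuple {n : ℕ} (T : Fin n → H →L[ℂ] H) : Prop :=
  IsSzegoTuple T ∧
    ∀ i j, i ≠ j → (1 - adjoint (T i) * T i) * (1 - adjoint (T j) * T j) = 0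

/-- Apply `∏_{k ∈ L} (I − Δ_{T k})` to `A`, where `Δ_X(A) = X A X*`. -/
noncomputable def applyDelta {n : ℕ} (T : Fin n → H →L[ℂ] H) (L : List (Fin n))
    (A : H →L[ℂ] H) : H →L[ℂ] H :=
  L.foldr (fun k B => B - T k * B * adjoint (T k)) A

/-- The truncated defect operator `D²_{j,T,P} = (∏_{k ∈ P} (I − Δ_{T k}))(I − Tⱼ*Tⱼ)`. -/
noncomputable def truncDefectSq {n : ℕ} (T : Fin n → H →L[ℂ] H) (j : Fin n)
    (P : Finset (Fin n)) : H →L[ℂ] H :=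
  applyDelta T (P.sort (· ≤ ·)) (1 - adjoint (T j) * T j)

/-- `D²_{j,T} = D²_{j,T,P}` for `P = {1,…,n} \ {j}`. -/
noncomputable def jointDefectSq {n : ℕ} (T : Fin n → H →L[ℂ] H) (j : Fin n) : H →L[ℂ] H :=
  truncDefectSq T j (Finset.univ.erase j)

/-- The `(i,j)`-th joint commutator `δᵢⱼ(T) = (∏_{k ∉ {i,j}} (I − Δ_{T k}))([Tⱼ, Tᵢ*])`. -/
noncomputable def jointComm {n : ℕ} (T : Fin n → H →L[ℂ] H) (i j : Fin n) : H →L[ℂ] H :=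
  applyDelta T (((Finset.univ.erase i).erase j).sort (· ≤ ·))
    (T j * adjoint (T i) - adjoint (T i) * T j)

/-- Extend a multi-index supported on `P` by zero: gives `T_P^α` via `finPow`. -/
def extendSupport {n : ℕ} (P : Finset (Fin n)) (α : ↥P → ℕ) : Fin n → ℕ :=
  fun i => if h : i ∈ P then α ⟨i, h⟩ else 0

/-! ### The operators `∏ (I - Δ_{T_k})` and the range inclusion for dilatable tuples -/

section Algebra

variable {K : Type*} [NormedAddCommGroup K] [InnerProductSpace ℂ K] [CompleteSpace K]

lemma applyDelta_cons {n : ℕ} (T : Fin n → H →L[ℂ] H) (k : Fin n) (L : List (Fin n))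
    (A : H →L[ℂ] H) :
    applyDelta T (k :: L) A = applyDelta T L A - T k * applyDelta T L A * star (T k) := rfl

/-- The maps `I - Δ_{T_k}` commute when the `T_k` do, so their order is irrelevant. -/
lemma applyDelta_perm {n : ℕ} {T : Fin n → H →L[ℂ] H} (hc : ∀ i j, T i * T j = T j * T i)
    {L L' : List (Fin n)} (h : L.Perm L') (A : H →L[ℂ] H) :
    applyDelta T L A = applyDelta T L' A := by
  refine h.foldr_eq' (fun a _ b _ B => ?_) A
  have h1 := hc a b
  have h2 : star (T b) * star (T a) = star (T a) * star (T b) := by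
    rw [← star_mul, ← star_mul, hc]
  simp only [← star_eq_adjoint, mul_sub, sub_mul]
  have h3 : T a * (T b * B * star (T b)) * star (T a)
      = T b * (T a * B * star (T a)) * star (T b) := by
    calc _ = (T a * T b) * B * (star (T b) * star (T a)) := by simp only [mul_assoc]
      _ = _ := by rw [h1, h2]; simp only [mul_assoc]
  rw [h3]; abel

/-- If `T_k X† = X† V_k` and `T_k Y† = Y† V_k`, then `∏ (I - Δ_{T_k})` acts on `X† B Y` by applying
`∏ (I - Δ_{V_k})` to `B`. -/
lemma applyDelta_intertwine {n : ℕ} {T : Fin n → H →L[ℂ] H} {V : Fin n → K →L[ℂ] K}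
    {X Y : H →L[ℂ] K} (L : List (Fin n))
    (hX : ∀ k ∈ L, T k ∘L adjoint X = adjoint X ∘L V k)
    (hY : ∀ k ∈ L, T k ∘L adjoint Y = adjoint Y ∘L V k) (B : K →L[ℂ] K) :
    applyDelta T L (adjoint X ∘L B ∘L Y) = adjoint X ∘L applyDelta V L B ∘L Y := by
  induction L with
  | nil => rfl
  | cons k L ih =>
    rw [applyDelta_cons, applyDelta_cons,
      ih (fun l hl => hX l (by simp [hl])) (fun l hl => hY l (by simp [hl]))]
    have h1 := hX k (by simp)
    have h2 := congrArg adjoint (hY k (by simp))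
    simp only [adjoint_comp, adjoint_adjoint] at h2
    ext x
    have h1' := fun y => DFunLike.congr_fun h1 y
    have h2' := fun y => DFunLike.congr_fun h2 y
    simp only [comp_apply] at h1' h2'
    simp [star_eq_adjoint, h1', h2']

/-- For doubly commuting isometries `V_k` of `ran R` (extended by zero), `∏_{k ∈ L} (I - Δ_{V_k})(R)`
is the orthogonal projection onto the part of `ran R` orthogonal to all `ran V_k`, `k ∈ L`. The last
conjunct, that it commutes with the remaining `V_k`, carries the induction. -/
lemma applyDelta_isProj {n : ℕ} {V : Fin n → K →L[ℂ] K} {R : K →L[ℂ] K}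
    (hR : star R = R) (hRR : R * R = R) (hRV : ∀ k, R * V k = V k) (hVR : ∀ k, V k * R = V k)
    (hVV : ∀ k, star (V k) * V k = R) (hc : ∀ i j, V i * V j = V j * V i)
    (hdc : ∀ i j, i ≠ j → star (V i) * V j = V j * star (V i))
    (L : List (Fin n)) (hL : L.Nodup) :
    star (applyDelta V L R) = applyDelta V L R ∧
    applyDelta V L R * applyDelta V L R = applyDelta V L R ∧
    R * applyDelta V L R = applyDelta V L R ∧
    ∀ k ∉ L, V k * applyDelta V L R = applyDelta V L R * V k := by
  induction L with
  | nil => exact ⟨hR, hRR, hRR, fun k _ => by rw [show applyDelta V [] R = R from rfl, hVR, hRV]⟩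
  | cons k L ih =>
    obtain ⟨hk, hL'⟩ := List.nodup_cons.1 hL
    obtain ⟨h1, h2, h3, h4⟩ := ih hL'
    rw [applyDelta_cons]
    generalize applyDelta V L R = G at *
    have hkG := h4 k hk
    have hkG' : star (V k) * G = G * star (V k) := by
      have := congrArg star hkG
      rw [star_mul, star_mul, h1] at this
      exact this.symm
    have hGR : G * R = G := by
      have := congrArg star h3
      rwa [star_mul, h1, hR] at this
    refine ⟨?_, ?_, ?_, ?_⟩
    · simp [h1, mul_assoc]
    · have e1 : G * (V k * G * star (V k)) = V k * G * star (V k) := by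
        rw [← mul_assoc, ← mul_assoc, ← hkG, mul_assoc (V k), h2]
      have e2 : V k * G * star (V k) * G = V k * G * star (V k) := by
        rw [mul_assoc, hkG', ← mul_assoc, mul_assoc (V k), h2]
      have e3 : V k * G * star (V k) * (V k * G * star (V k)) = V k * G * star (V k) := by
        calc _ = V k * (G * (star (V k) * V k) * G) * star (V k) := by simp only [mul_assoc]
          _ = _ := by rw [hVV, hGR, h2]
      rw [sub_mul, mul_sub, mul_sub, h2, e1, e2, e3]; abel
    · rw [mul_sub, h3, ← mul_assoc, ← mul_assoc, hRV]
    · intro l hl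
      obtain ⟨hlk, hlL⟩ := not_or.1 (fun h => hl (List.mem_cons.2 h))
      rw [mul_sub, sub_mul, h4 l hlL]
      congr 1
      calc _ = (V l * V k) * G * star (V k) := by simp only [mul_assoc]
        _ = V k * (V l * G) * star (V k) := by rw [hc]; simp only [mul_assoc]
        _ = V k * G * (V l * star (V k)) := by rw [h4 l hlL]; simp only [mul_assoc]
        _ = _ := by rw [← hdc k l (Ne.symm hlk)]; simp only [mul_assoc]

/-- `ran Y X ⊆ ran Y ⊆ closure (ran Y Y†)`, since `ker Y Y† = ker Y†`. -/
lemma range_comp_subset_closure (Y : K →L[ℂ] H) (X : H →L[ℂ] K) :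
    Set.range ⇑(Y ∘L X) ⊆ closure (Set.range ⇑(Y ∘L adjoint Y)) := by
  have h : Y.range ≤ (Y ∘L adjoint Y).range.topologicalClosure := by
    rw [← Submodule.orthogonal_orthogonal_eq_closure, orthogonal_range]
    intro y hy
    rw [Submodule.mem_orthogonal]
    intro u hu
    obtain ⟨x, rfl⟩ := hy
    have hu' : Y (adjoint Y u) = 0 := by simpa [adjoint_comp] using hu
    have h0 : adjoint Y u = 0 := by
      rw [← inner_self_eq_zero (𝕜 := ℂ), adjoint_inner_left, hu', inner_zero_right]
    change inner ℂ u (Y x) = 0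
    rw [← adjoint_inner_left, h0, inner_zero_left]
  rintro _ ⟨x, rfl⟩
  exact h ⟨X x, rfl⟩

/-- The range inclusion for a tuple with a model: doubly commuting isometries `V_k` of `ran R`
(extended by zero) and operators `X_k : H → K` with values in `ran R ⊖ ran V_k` such that
`I - T_i* T_i = X_i† X_i`, `[T_j, T_i*] = X_i† X_j` and `T_k X_i† = X_i† V_k`. With
`Y = X_i† G`, where `G` is the projection `∏_{k ≠ i} (I - Δ_{V_k})(R)`, one has `D²_{i,T} = Y Y†` and
`δ_{ij}(T) = Y X_j`. -/
lemma range_subset_of_model {n : ℕ} {T : Fin n → H →L[ℂ] H} {V : Fin n → K →L[ℂ] K}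
    {R : K →L[ℂ] K} {X : Fin n → H →L[ℂ] K}
    (hR : star R = R) (hRR : R * R = R) (hRV : ∀ k, R * V k = V k) (hVR : ∀ k, V k * R = V k)
    (hVV : ∀ k, star (V k) * V k = R) (hc : ∀ i j, V i * V j = V j * V i)
    (hdc : ∀ i j, i ≠ j → star (V i) * V j = V j * star (V i))
    (hRX : ∀ i, R ∘L X i = X i) (hVX : ∀ i, adjoint (V i) ∘L X i = 0)
    (hD : ∀ i, 1 - adjoint (T i) * T i = adjoint (X i) ∘L X i)
    (hC : ∀ i j, i ≠ j → T j * adjoint (T i) - adjoint (T i) * T j = adjoint (X i) ∘L X j)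
    (hTX : ∀ i k, i ≠ k → T k ∘L adjoint (X i) = adjoint (X i) ∘L V k)
    (i j : Fin n) (hij : i ≠ j) :
    closure (Set.range ⇑(jointComm T i j)) ⊆ closure (Set.range ⇑(jointDefectSq T i)) := by
  set L := ((Finset.univ.erase i).erase j).sort (· ≤ ·)
  set L' := (Finset.univ.erase i).sort (· ≤ ·)
  have hmem : ∀ k ∈ L, i ≠ k ∧ j ≠ k := fun k hk => by
    simp [L] at hk; exact ⟨Ne.symm hk.2, Ne.symm hk.1⟩
  have hmem' : ∀ k ∈ L', i ≠ k := fun k hk => by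
    simp [L'] at hk; exact Ne.symm hk
  have hperm : L'.Perm (j :: L) := by
    rw [List.perm_ext_iff_of_nodup (Finset.sort_nodup _ _)
      (List.nodup_cons.2 ⟨by simp [L], Finset.sort_nodup _ _⟩)]
    intro a
    simp only [L, L', Finset.mem_sort, List.mem_cons, Finset.mem_erase, Finset.mem_univ,
      and_true]
    by_cases h : a = j <;> simp [h, hij.symm]
  obtain ⟨hG1, hG2, -, -⟩ :=
    applyDelta_isProj hR hRR hRV hVR hVV hc hdc L' (Finset.sort_nodup _ _)
  obtain ⟨hg1, -, -, hg4⟩ :=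
    applyDelta_isProj hR hRR hRV hVR hVV hc hdc L (Finset.sort_nodup _ _)
  have hGg : applyDelta V L' R = applyDelta V L R -
      applyDelta V L R * (V j * star (V j)) := by
    rw [applyDelta_perm hc hperm, applyDelta_cons, hg4 j (by simp [L]), mul_assoc]
  -- The factor `I - Δ_{V_j}` missing from `δ_{ij}` can be inserted for free, because `V_j† X_j = 0`.
  have hgX : applyDelta V L' R ∘L X j = applyDelta V L R ∘L X j := by
    ext x
    have := fun x => DFunLike.congr_fun (hVX j) x
    simp only [comp_apply, zero_apply] at this
    simp [hGg, star_eq_adjoint, this]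
  set Y : K →L[ℂ] H := adjoint (X i) ∘L applyDelta V L' R with hY
  have e1 : jointComm T i j = Y ∘L X j := by
    rw [jointComm, hC i j hij]
    conv_lhs => rw [← hRX j]
    rw [applyDelta_intertwine L (fun k hk => hTX i k (hmem k hk).1)
      (fun k hk => hTX j k (hmem k hk).2), ← hgX, hY, comp_assoc]
  have e2 : jointDefectSq T i = Y ∘L adjoint Y := by
    rw [jointDefectSq, truncDefectSq, hD i]
    have hXX : adjoint (X i) ∘L X i = adjoint (X i) ∘L R ∘L X i := by rw [hRX]
    rw [hXX, applyDelta_intertwine L' (fun k hk => hTX i k (hmem' k hk))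
      (fun k hk => hTX i k (hmem' k hk)), hY, adjoint_comp, adjoint_adjoint, ← star_eq_adjoint,
      hG1]
    conv_lhs => rw [← hG2]
    rfl
  rw [e1, e2]
  exact closure_minimal (range_comp_subset_closure _ _) isClosed_closure

/-- If `A†A` and `B†B` have product zero, then `A` and `B` have orthogonal initial spaces. -/
lemma comp_adjoint_eq_zero {A B : H →L[ℂ] K}
    (h : (adjoint A ∘L A) * (adjoint B ∘L B) = 0) : A ∘L adjoint B = 0 := by
  have key : ∀ (C : H →L[ℂ] K) (z : H), adjoint C (C z) = 0 → C z = 0 := fun C z hz => by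
    rw [← inner_self_eq_zero (𝕜 := ℂ), ← adjoint_inner_left, hz, inner_zero_left]
  have h1 : A ∘L (adjoint B ∘L B) = 0 := by
    ext x
    exact key A _ (by simpa using DFunLike.congr_fun h x)
  have h2 : (adjoint B ∘L B) ∘L adjoint A = 0 := by
    simpa [adjoint_comp, comp_assoc] using congrArg adjoint h1
  have h3 : B ∘L adjoint A = 0 := by
    ext x
    exact key B _ (by simpa using DFunLike.congr_fun h2 x)
  simpa [adjoint_comp] using congrArg adjoint h3

/-- The range inclusion when `T*` is the restriction, along an isometry `J`, of the adjoints of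
doubly commuting isometries `M_k`. With `R = 1 - J J†`, the model is `V_k = M_k R`,
`X_k = R M_k J`. The Beurling condition says `X_i X_j† = 0`, which is exactly the failure of
`V_i† V_j = V_j V_i†`. -/
lemma range_subset_of_dilation {n : ℕ} {T : Fin n → H →L[ℂ] H}
    (hB : ∀ i j, i ≠ j → (1 - adjoint (T i) * T i) * (1 - adjoint (T j) * T j) = 0)
    {M : Fin n → K →L[ℂ] K} {J : H →L[ℂ] K}
    (hJ : ∀ x, adjoint J (J x) = x) (hMM : ∀ k y, adjoint (M k) (M k y) = y)
    (hMc : ∀ i j y, M i (M j y) = M j (M i y))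
    (hMd : ∀ i j, i ≠ j → ∀ y, adjoint (M i) (M j y) = M j (adjoint (M i) y))
    (hMJ : ∀ k x, adjoint (M k) (J x) = J (adjoint (T k) x))
    (i j : Fin n) (hij : i ≠ j) :
    closure (Set.range ⇑(jointComm T i j)) ⊆ closure (Set.range ⇑(jointDefectSq T i)) := by
  have hJM : ∀ k y, adjoint J (M k y) = T k (adjoint J y) := fun k y => by
    refine ext_inner_right ℂ fun v => ?_
    rw [adjoint_inner_left, ← adjoint_inner_right, hMJ, ← adjoint_inner_left,
      adjoint_inner_right]
  set R : K →L[ℂ] K := 1 - J ∘L adjoint J with hRdef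
  have hRs : adjoint R = R := by
    rw [hRdef, map_sub, adjoint_comp, adjoint_adjoint]
    congr 1
    exact star_one _
  set V : Fin n → K →L[ℂ] K := fun k => M k ∘L R with hV
  set X : Fin n → H →L[ℂ] K := fun k => R ∘L M k ∘L J with hX
  have hRa : ∀ y, R y = y - J (adjoint J y) := fun y => rfl
  have hVa : ∀ k y, V k y = M k y - M k (J (adjoint J y)) := fun k y => by
    simp [hV, hRa]
  have hVs : ∀ k y, adjoint (V k) y = adjoint (M k) y - J (adjoint J (adjoint (M k) y)) :=
    fun k y => by simp [hV, adjoint_comp, hRs, hRa]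
  have hXa : ∀ k x, X k x = M k (J x) - J (T k x) := fun k x => by
    simp [hX, hRa, hJM, hJ]
  have hXs : ∀ k y, adjoint (X k) y
      = adjoint J (adjoint (M k) y) - adjoint (T k) (adjoint J y) := fun k y => by
    simp [hX, adjoint_comp, hRs, hRa, hMJ, hJ]
  have hD : ∀ i, 1 - adjoint (T i) * T i = adjoint (X i) ∘L X i := fun i => by
    ext x
    simp [hXa, hXs, hMM, hMJ, hJM, hJ]
  have hXX : ∀ i j, i ≠ j → ∀ y, X i (adjoint (X j) y) = 0 := fun i j h y =>
    DFunLike.congr_fun (comp_adjoint_eq_zero (A := X i) (B := X j)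
      (by rw [← hD, ← hD]; exact hB i j h)) y
  refine range_subset_of_model (V := V) (R := R) (X := X) hRs ?_ ?_ ?_ ?_ ?_ ?_ ?_ ?_ hD ?_ ?_
    i j hij
  · ext y; simp [hRa, hJ]
  · intro k; ext y; simp [hRa, hVa, hJM, hJ]
  · intro k; ext y; simp [hRa, hVa, hJ]
  · intro k; ext y; simp [star_eq_adjoint, hRa, hVa, hVs, hMM, hJ]
  · intro i j; ext y
    simp [hVa, hJM, hJ, hMc i j]
  · intro i j h; ext y
    have := hXX j i h.symm y
    simp only [hXa, hXs, map_sub] at this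
    change adjoint (V i) (V j y) = V j (adjoint (V i) y)
    simp only [hVa, hVs, map_sub, hMd i j h, hMJ, hJM, hJ]
    rw [← sub_eq_zero, ← this]
    abel
  · intro i; ext x; simp [hRa, hXa, hJM, hJ]
  · intro i; ext x; simp [hXa, hVs, hMM, hMJ, hJ]
  · intro i j h; ext x
    simp [hXa, hXs, hMd i j h, hMJ, hJM, hJ]
  · intro i k h; ext y
    simp [hXs, hVa, hMd i k h, hMJ, hJM, hJ]

end Algebra

/-! ### Backward shifts on `ℓ²(ι, H)` -/

section Shift

variable {ι : Type*}

lemma lp_two_summable (f : lp (fun _ : ι => H) 2) : Summable fun i => ‖f i‖ ^ 2 := by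
  have := (lp.memℓp f).summable (by norm_num)
  simpa using this

lemma lp_two_norm_sq (f : lp (fun _ : ι => H) 2) : ‖f‖ ^ 2 = ∑' i, ‖f i‖ ^ 2 := by
  have := lp.norm_rpow_eq_tsum (p := 2) (by norm_num) f
  simpa using this

lemma memlp_two {f : ι → H} (hf : Summable fun i => ‖f i‖ ^ 2) :
    Memℓp (E := fun _ : ι => H) f 2 := by
  refine memℓp_gen ?_
  simpa using hf

/-- The composition operator `f ↦ f ∘ e` on `ℓ²(ι, H)` for an injective `e`. For
`e α = α + e_k` this is the `k`-th backward shift. -/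
noncomputable def lpShift (e : ι → ι) (he : Function.Injective e) :
    lp (fun _ : ι => H) 2 →L[ℂ] lp (fun _ : ι => H) 2 :=
  LinearMap.mkContinuous
    { toFun := fun f => ⟨fun i => f (e i), memlp_two ((lp_two_summable f).comp_injective he)⟩
      map_add' := fun _ _ => rfl
      map_smul' := fun _ _ => rfl } 1 (fun f => by
        rw [one_mul]
        refine le_of_sq_le_sq ?_ (norm_nonneg _)
        rw [lp_two_norm_sq, lp_two_norm_sq]
        exact tsum_comp_le_tsum_of_inj (lp_two_summable f) (fun _ => by positivity) he)

lemma lpShift_apply (e : ι → ι) (he : Function.Injective e) (f : lp (fun _ : ι => H) 2) (i : ι) :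
    lpShift e he f i = f (e i) := rfl

lemma adjoint_lpShift_apply (e : ι → ι) (he : Function.Injective e)
    (f : lp (fun _ : ι => H) 2) (i : ι) : adjoint (lpShift e he) f (e i) = f i := by
  classical
  refine ext_inner_left ℂ fun v => ?_
  have h : lpShift e he (lp.single 2 (e i) v) = lp.single 2 i v := by
    ext j
    rw [lpShift_apply, lp.single_apply, lp.single_apply]
    by_cases hj : j = i
    · subst hj; simp
    · simp [hj, he.ne hj]
  refine (lp.inner_single_left (𝕜 := ℂ) (G := fun _ : ι => H) (e i) v _).symm.trans ?_
  rw [adjoint_inner_right, h]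
  exact lp.inner_single_left (𝕜 := ℂ) (G := fun _ : ι => H) i v f

lemma adjoint_lpShift_apply_of_notMem (e : ι → ι) (he : Function.Injective e)
    (f : lp (fun _ : ι => H) 2) (i : ι) (hi : i ∉ Set.range e) :
    adjoint (lpShift e he) f i = 0 := by
  classical
  refine ext_inner_left ℂ fun v => ?_
  have h : lpShift e he (lp.single 2 i v) = 0 := by
    ext j
    rw [lpShift_apply, lp.single_apply, Pi.single_eq_of_ne (fun h => hi ⟨j, h⟩)]
    rfl
  refine (lp.inner_single_left (𝕜 := ℂ) (G := fun _ : ι => H) i v _).symm.trans ?_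
  rw [adjoint_inner_right, h, inner_zero_left, inner_zero_right]

end Shift

/-! ### The isometric dilation of a Szegő tuple -/

section Dilation

lemma finPow_succ {n : ℕ} (T : Fin (n + 1) → H →L[ℂ] H) (α : Fin (n + 1) → ℕ) :
    finPow T α = T 0 ^ α 0 * finPow (fun i => T i.succ) (fun i => α i.succ) := by
  simp [finPow, List.finRange_succ, Function.comp_def]

lemma commute_finPow {n : ℕ} {T : Fin n → H →L[ℂ] H} {B : H →L[ℂ] H}
    (h : ∀ i, Commute B (T i)) (α : Fin n → ℕ) : Commute B (finPow T α) := by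
  refine Commute.list_prod_right _ _ fun x hx => ?_
  obtain ⟨i, -, rfl⟩ := List.mem_map.1 hx
  exact (h i).pow_right _

lemma finPow_add_single {n : ℕ} {T : Fin n → H →L[ℂ] H} (hc : ∀ i j, T i * T j = T j * T i)
    (α : Fin n → ℕ) (k : Fin n) : finPow T (α + Pi.single k 1) = T k * finPow T α := by
  induction n with
  | zero => exact k.elim0
  | succ n ih =>
    rw [finPow_succ, finPow_succ T α]
    refine Fin.cases ?_ (fun k => ?_) k
    · simp [pow_succ', mul_assoc]
    · have h1 : (fun i : Fin n => (α + Pi.single k.succ 1 : Fin (n + 1) → ℕ) i.succ)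
          = (fun i : Fin n => α i.succ) + Pi.single k 1 := by
        ext i
        simp [Pi.single_apply]
      rw [h1, ih (fun i j => hc _ _)]
      have h2 : (α + Pi.single k.succ 1 : Fin (n + 1) → ℕ) 0 = α 0 := by simp
      have h3 : Commute (T 0 ^ α 0) (T k.succ) := Commute.pow_left (hc _ _) _
      rw [h2, ← mul_assoc, h3.eq, mul_assoc]

/-- Splitting off the first operator: `𝕊⁻¹(T) = (I - Δ_{T₀}) 𝕊⁻¹(T₁, …, Tₙ)`. -/
lemma szegoInv_succ {n : ℕ} (T : Fin (n + 1) → H →L[ℂ] H) :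
    szegoInv T = szegoInv (fun i => T i.succ)
      - T 0 * szegoInv (fun i => T i.succ) * adjoint (T 0) := by
  unfold szegoInv
  rw [← (Fin.consEquiv (fun _ : Fin (n + 1) => Bool)).sum_comp, Fintype.sum_prod_type,
    Fintype.sum_bool, add_comm]
  rw [Finset.mul_sum, Finset.sum_mul, sub_eq_add_neg, ← Finset.sum_neg_distrib]
  congr 1
  · refine Finset.sum_congr rfl fun k _ => ?_
    simp only [Fin.consEquiv_apply, Fin.sum_univ_succ, Fin.cons_zero, Fin.cons_succ, finPow_succ]
    simp
  · refine Finset.sum_congr rfl fun k _ => ?_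
    simp only [Fin.consEquiv_apply, Fin.sum_univ_succ, Fin.cons_zero, Fin.cons_succ, finPow_succ]
    simp [pow_add, ← star_eq_adjoint, mul_assoc]

lemma hasSum_prod_of_nonneg {β γ : Type*} {f : β × γ → ℝ} {g : β → ℝ} {a : ℝ}
    (hf : ∀ p, 0 ≤ f p) (hg : ∀ b, HasSum (fun c => f (b, c)) (g b)) (ha : HasSum g a) :
    HasSum f a := by
  have hfs : Summable f := by
    rw [summable_prod_of_nonneg hf]
    exact ⟨fun b => (hg b).summable, ha.summable.congr fun b => (hg b).tsum_eq.symm⟩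
  rw [ha.unique (hfs.hasSum.prod_fiberwise hg)]
  exact hfs.hasSum

/-- Iterated summation over `ℕⁿ⁺¹`, the first exponent being summed first. -/
lemma hasSum_finCons_of_nonneg {n : ℕ} {F : (Fin (n + 1) → ℕ) → ℝ} {g : (Fin n → ℕ) → ℝ} {a : ℝ}
    (hF : ∀ α, 0 ≤ F α)
    (hg : ∀ β, HasSum (fun m : ℕ => F (Fin.cons (α := fun _ => ℕ) m β)) (g β))
    (ha : HasSum g a) : HasSum F a :=
  ((Equiv.prodComm (Fin n → ℕ) ℕ).trans (Fin.consEquiv fun _ : Fin (n + 1) => ℕ)).hasSum_iff.1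
    (hasSum_prod_of_nonneg (fun _ => hF _) hg ha)

/-- The Szegő identity `∑_α ⟪S T^{*α} h, T^{*α} h⟫ = ‖h‖²`, where `S = 𝕊ₙ⁻¹(T, T*)`. By induction
on `n`: with `S'` the Szegő operator of `(T₁, …, Tₙ)`, `S = S' - T₀ S' T₀*`, so the sum over
the exponent of `T₀` telescopes. It also shows `S' ≥ 0`, which is what the induction hypothesis
needs. -/
lemma hasSum_szego {n : ℕ} {T : Fin n → H →L[ℂ] H} (hc : ∀ i j, T i * T j = T j * T i)
    (hpos : ∀ x, 0 ≤ (szegoInv T).reApplyInnerSelf x)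
    (hpure : ∀ i (h : H), Tendsto (fun m : ℕ => (adjoint (T i) ^ m) h) atTop (𝓝 0)) (h : H) :
    HasSum (fun α : Fin n → ℕ => (szegoInv T).reApplyInnerSelf (adjoint (finPow T α) h))
      (‖h‖ ^ 2) := by
  induction n with
  | zero =>
    have h1 : ∀ α, finPow T α = 1 := fun α => by simp [finPow]
    have h2 : adjoint (1 : H →L[ℂ] H) = 1 := star_one _
    have h3 : szegoInv T = 1 := by simp [szegoInv, h1, h2]
    have h4 : (1 : H →L[ℂ] H).reApplyInnerSelf h = ‖h‖ ^ 2 := by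
      rw [norm_sq_eq_re_inner (𝕜 := ℂ)]
      rfl
    have h5 : (fun α : Fin 0 → ℕ => (szegoInv T).reApplyInnerSelf (adjoint (finPow T α) h))
        = fun _ => ‖h‖ ^ 2 := by
      ext α
      rw [h1, h2, h3]
      exact h4
    rw [h5]
    exact hasSum_unique (fun _ : Fin 0 → ℕ => ‖h‖ ^ 2)
  | succ n ih =>
    set T' : Fin n → H →L[ℂ] H := fun i => T i.succ with hT'
    set S' := szegoInv T'
    have hS : ∀ x, (szegoInv T).reApplyInnerSelf x
        = S'.reApplyInnerSelf x - S'.reApplyInnerSelf (adjoint (T 0) x) := by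
      intro x
      rw [szegoInv_succ]
      change RCLike.re (inner ℂ (S' x - T 0 (S' (adjoint (T 0) x))) x) = RCLike.re (inner ℂ _ _)
        - RCLike.re (inner ℂ _ _)
      rw [inner_sub_left, map_sub, adjoint_inner_right]
    -- Telescoping along the powers of `(T 0)†`; purity kills the remainder.
    have htel : ∀ g, HasSum (fun m : ℕ => (szegoInv T).reApplyInnerSelf ((adjoint (T 0) ^ m) g))
        (S'.reApplyInnerSelf g) := by
      intro g
      rw [hasSum_iff_tendsto_nat_of_nonneg (fun m => hpos _)]
      have h1 : ∀ N : ℕ, ∑ m ∈ Finset.range N,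
          (szegoInv T).reApplyInnerSelf ((adjoint (T 0) ^ m) g)
          = S'.reApplyInnerSelf g - S'.reApplyInnerSelf ((adjoint (T 0) ^ N) g) := by
        intro N
        refine Eq.trans (Finset.sum_congr rfl fun m _ => ?_)
          (Finset.sum_range_sub' (fun m => S'.reApplyInnerSelf ((adjoint (T 0) ^ m) g)) N)
        rw [hS, pow_succ']
        rfl
      refine Tendsto.congr (fun N => (h1 N).symm) ?_
      have h0 := (S'.reApplyInnerSelf_continuous.tendsto 0).comp (hpure 0 g)
      have hq0 : S'.reApplyInnerSelf 0 = 0 := by simp [reApplyInnerSelf_apply]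
      rw [hq0] at h0
      have h2 := h0.const_sub (S'.reApplyInnerSelf g)
      rwa [sub_zero] at h2
    have hpos' : ∀ x, 0 ≤ S'.reApplyInnerSelf x := fun x => (htel x).nonneg fun m => hpos _
    have ih' := ih (T := T') (fun i j => hc _ _) hpos' (fun i => hpure _)
    have hF : ∀ (m : ℕ) (β : Fin n → ℕ),
        adjoint (finPow T (Fin.cons m β)) h = (adjoint (T 0) ^ m) (adjoint (finPow T' β) h) := by
      intro m β
      have hcomm : Commute (T 0 ^ m) (finPow T' β) :=
        commute_finPow (fun i => Commute.pow_left (hc _ _) _) β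
      have h1 : finPow T (Fin.cons m β) = finPow T' β * T 0 ^ m := by
        rw [finPow_succ, ← hcomm.eq]
        rfl
      rw [h1, ← star_eq_adjoint, star_mul, star_pow]
      rfl
    refine hasSum_finCons_of_nonneg (fun α => hpos _) (fun β => ?_) ih'
    simp only [hF]
    exact htel _

/-- A Szegő tuple is the compression of the multishift on `ℓ²(ℕⁿ, H)`: with `A = 𝕊ₙ⁻¹(T, T*)^{1/2}`,
the map `J h = (A T^{*α} h)_α` is isometric by `hasSum_szego`, and it intertwines `T_k*` with the
`k`-th backward shift. The isometry property is expressed as `J† J = 1`. -/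
lemma exists_dilation {n : ℕ} {T : Fin n → H →L[ℂ] H} (hT : IsSzegoTuple T) :
    ∃ J : H →L[ℂ] lp (fun _ : Fin n → ℕ => H) 2, (∀ x, adjoint J (J x) = x) ∧
      ∀ k x α, J x (α + Pi.single k 1) = J (adjoint (T k) x) α := by
  have hS0 : 0 ≤ szegoInv T := (nonneg_iff_isPositive _).2 hT.pos
  set A := CFC.sqrt (szegoInv T)
  have hA : adjoint A * A = szegoInv T := by
    rw [← star_eq_adjoint, (CFC.sqrt_nonneg (szegoInv T)).isSelfAdjoint.star_eq]
    exact CFC.sqrt_mul_sqrt_self _ hS0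
  have hpos : ∀ x, 0 ≤ (szegoInv T).reApplyInnerSelf x := hT.pos.2
  have hsum : ∀ h, HasSum (fun α : Fin n → ℕ => ‖A (adjoint (finPow T α) h)‖ ^ 2) (‖h‖ ^ 2) := by
    intro h
    convert hasSum_szego hT.comm hpos hT.pure h using 2 with α
    rw [← hA]
    change _ = RCLike.re (inner ℂ (adjoint A (A _)) _)
    rw [adjoint_inner_left, norm_sq_eq_re_inner (𝕜 := ℂ)]
  let J : H →ₗᵢ[ℂ] lp (fun _ : Fin n → ℕ => H) 2 :=
    { toFun := fun h => ⟨fun α => A (adjoint (finPow T α) h), memlp_two (hsum h).summable⟩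
      map_add' := fun x y => by ext α; exact (A ∘L adjoint (finPow T α)).map_add x y
      map_smul' := fun c x => by ext α; exact (A ∘L adjoint (finPow T α)).map_smul c x
      norm_map' := fun h => by
        rw [← sq_eq_sq₀ (norm_nonneg _) (norm_nonneg _), lp_two_norm_sq]
        exact (hsum h).tsum_eq }
  refine ⟨J.toContinuousLinearMap, fun x => ?_, fun k x α => ?_⟩
  · refine ext_inner_right ℂ fun v => ?_
    rw [adjoint_inner_left]
    exact J.inner_map_map x v
  · change A (adjoint (finPow T (α + Pi.single k 1)) x) = A (adjoint (finPow T α) (adjoint (T k) x))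
    rw [finPow_add_single hT.comm, ← star_eq_adjoint, star_mul]
    rfl

end Dilation

/-- For a Beurling tuple `T` and `i ≠ j`, the closure of the range of the
joint commutator `δᵢⱼ(T)` is contained in the truncated defect space `𝒟_{i,T}`. -/
theorem beurling_jointComm_range_subset {n : ℕ} (hn : 2 ≤ n) (T : Fin n → H →L[ℂ] H)
    (hT : IsBeurlingTuple T) (i j : Fin n) (hij : i ≠ j) :
    closure (Set.range ⇑(jointComm T i j)) ⊆
      closure (Set.range ⇑(jointDefectSq T i)) := by
  obtain ⟨J, hJ, hJT⟩ := exists_dilation hT.1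
  have he : ∀ k : Fin n, Function.Injective fun α : Fin n → ℕ => α + Pi.single k 1 :=
    fun k => add_left_injective _
  let L : Fin n → lp (fun _ : Fin n → ℕ => H) 2 →L[ℂ] lp (fun _ : Fin n → ℕ => H) 2 :=
    fun k => lpShift _ (he k)
  have hL : ∀ k f α, L k f α = f (α + Pi.single k 1) := fun _ _ _ => rfl
  have hLs : ∀ k f α, adjoint (L k) f (α + Pi.single k 1) = f α :=
    fun k f α => adjoint_lpShift_apply _ (he k) f α
  have hLL : ∀ i j y, L i (L j y) = L j (L i y) := fun i j y => by
    ext α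
    rw [hL, hL, hL, hL, add_right_comm]
  -- The dilating isometries are the forward shifts, that is, the adjoints of the `L k`.
  refine range_subset_of_dilation hT.2 (M := fun k => adjoint (L k)) (J := J) hJ
    (fun k y => ?_) (fun i j y => ?_) (fun i j h y => ?_) (fun k x => ?_) i j hij
  · rw [adjoint_adjoint]
    ext α
    rw [hL, hLs]
  · refine ext_inner_right ℂ fun v => ?_
    simp only [adjoint_inner_left, hLL]
  · simp only [adjoint_adjoint]
    ext α
    rw [hL]
    -- Both sides vanish at `α` unless `α` is in the range of the translation by `e_j`.
    by_cases hα : α j = 0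
    · have hnot : ∀ γ : Fin n → ℕ, γ j = 0 →
          γ ∉ Set.range fun β : Fin n → ℕ => β + Pi.single j 1 := by
        rintro γ hγ ⟨β, rfl⟩
        simp at hγ
      rw [adjoint_lpShift_apply_of_notMem _ (he j) _ _ (hnot _ (by simp [hα, h.symm])),
        adjoint_lpShift_apply_of_notMem _ (he j) _ _ (hnot _ hα)]
    · obtain ⟨β, rfl⟩ : ∃ β : Fin n → ℕ, α = β + Pi.single j 1 := by
        refine ⟨α - Pi.single j 1, ?_⟩
        ext l
        by_cases hl : l = j
        · subst hl; simp; omega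
        · simp [hl]
      rw [hLs, add_right_comm, hLs, hL]
  · simp only [adjoint_adjoint]
    ext α
    rw [hL, hJT]
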